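/- Let (A, {Δ(λ)}) be a split quasi-hereditary algebra over a commutative Noetherian ring R. The subcategory F(Δ̃) is a resolving subcategory of the category of finitely generated A-modules that are projective over R: it contains all finitely generated projective A-modules, and is closed under extensions, direct summands, and kernels of epimorphisms. -/

import Mathlib

open scoped TensorProduct
open CategoryTheory

noncomputable section

section Core

variable (R : Type) [CommRing R] (A : Type) [Ring A] [Algebra R A]

/-- The action of `a : A` on an `A`-module as an `R`-linear endomorphism. -/
def actL (M : Type) [AddCommGroup M] [Module R M] [Module A M] [IsScalarTower R A M]
    (a : A) : M →ₗ[R] M where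
  toFun m := a • m
  map_add' := smul_add a
  map_smul' r m := (smul_comm r a m).symm

/-- The right `A`-module (i.e. `Aᵐᵒᵖ`-module) structure on the `R`-linear dual of a left
`A`-module `M`, given by `(aᵒᵖ • f) m = f (a • m)`. -/
instance dualModule (M : Type) [AddCommGroup M] [Module R M] [Module A M]
    [IsScalarTower R A M] : Module Aᵐᵒᵖ (M →ₗ[R] R) where
  smul a f := f.comp (actL R A M a.unop)
  one_smul f := by ext m; show f ((1 : Aᵐᵒᵖ).unop • m) = f m; simp
  mul_smul a b f := by
    ext m
    show f ((a * b).unop • m) = f (b.unop • a.unop • m)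
    simp [mul_smul]
  smul_zero a := rfl
  smul_add a f g := rfl
  add_smul a b f := by
    ext m
    show f ((a + b).unop • m) = f (a.unop • m) + f (b.unop • m)
    simp [add_smul]
  zero_smul f := by ext m; show f ((0 : Aᵐᵒᵖ).unop • m) = 0; simp

@[simp] lemma dualModule_smul_apply (M : Type) [AddCommGroup M] [Module R M] [Module A M]
    [IsScalarTower R A M] (a : Aᵐᵒᵖ) (f : M →ₗ[R] R) (m : M) :
    (a • f) m = f (a.unop • m) := rfl

instance dualTower (M : Type) [AddCommGroup M] [Module R M] [Module A M]
    [IsScalarTower R A M] : IsScalarTower R Aᵐᵒᵖ (M →ₗ[R] R) := by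
  constructor
  intro r a f
  ext m
  show f ((r • a).unop • m) = r • f (a.unop • m)
  rw [MulOpposite.unop_smul, smul_assoc, map_smul]

/-- The left `A`-module structure on the `R`-linear dual of a right `A`-module
(i.e. an `Aᵐᵒᵖ`-module) `M`, given by `(a • f) m = f (aᵒᵖ • m)`. -/
instance dualModule' (M : Type) [AddCommGroup M] [Module R M] [Module Aᵐᵒᵖ M]
    [IsScalarTower R Aᵐᵒᵖ M] : Module A (M →ₗ[R] R) where
  smul a f := f.comp (actL R Aᵐᵒᵖ M (MulOpposite.op a))
  one_smul f := by ext m; show f (MulOpposite.op (1 : A) • m) = f m; simp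
  mul_smul a b f := by
    ext m
    show f (MulOpposite.op (a * b) • m) = f (MulOpposite.op b • MulOpposite.op a • m)
    rw [MulOpposite.op_mul, mul_smul]
  smul_zero a := rfl
  smul_add a f g := rfl
  add_smul a b f := by
    ext m
    show f (MulOpposite.op (a + b) • m) = f (MulOpposite.op a • m) + f (MulOpposite.op b • m)
    rw [MulOpposite.op_add, add_smul, map_add]
  zero_smul f := by ext m; show f (MulOpposite.op (0 : A) • m) = 0; simp

@[simp] lemma dualModule'_smul_apply (M : Type) [AddCommGroup M] [Module R M] [Module Aᵐᵒᵖ M]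
    [IsScalarTower R Aᵐᵒᵖ M] (a : A) (f : M →ₗ[R] R) (m : M) :
    (a • f) m = f (MulOpposite.op a • m) := rfl

instance dualTower' (M : Type) [AddCommGroup M] [Module R M] [Module Aᵐᵒᵖ M]
    [IsScalarTower R Aᵐᵒᵖ M] : IsScalarTower R A (M →ₗ[R] R) := by
  constructor
  intro r a f
  ext m
  show f (MulOpposite.op (r • a) • m) = r • f (MulOpposite.op a • m)
  rw [MulOpposite.op_smul, smul_assoc, map_smul]

variable (Λ : Type) [Fintype Λ] [PartialOrder Λ]

/-- Data witnessing that `X` is isomorphic to `Δ(λ) ⊗_R U` for some `λ ∈ S` and some finitely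
generated projective `R`-module `U`. -/
structure TensorFactor (Δ : Λ → Type) [∀ l, AddCommGroup (Δ l)] [∀ l, Module R (Δ l)]
    [∀ l, Module A (Δ l)] [∀ l, IsScalarTower R A (Δ l)]
    (S : Set Λ) (X : Type) [AddCommGroup X] [Module A X] : Type 1 where
  lam : Λ
  mem : lam ∈ S
  U : ModuleCat.{0} R
  fin : Module.Finite R U
  proj : Module.Projective R U
  iso : X ≃ₗ[A] (TensorProduct R (Δ lam) U)

/-- `M` belongs to `F(Δ̃_S)`: it is a finitely generated `A`-module with a finite filtration
whose factors are of the form `Δ(λ) ⊗_R U`, `λ ∈ S`, `U` a finitely generated projective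
`R`-module. -/
def InFilt (Δ : Λ → Type) [∀ l, AddCommGroup (Δ l)] [∀ l, Module R (Δ l)]
    [∀ l, Module A (Δ l)] [∀ l, IsScalarTower R A (Δ l)]
    (S : Set Λ) (M : Type) [AddCommGroup M] [Module A M] : Prop :=
  Module.Finite A M ∧
  ∃ (n : ℕ) (c : Fin (n + 1) → Submodule A M), c 0 = ⊥ ∧ c (Fin.last n) = ⊤ ∧ Monotone c ∧
    ∀ i : Fin n, Nonempty (TensorFactor R A Λ Δ S
      (↥(c i.succ) ⧸ (Submodule.comap (c i.succ).subtype (c i.castSucc))))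

/-- Data witnessing that `X` is isomorphic to `F(λ)` for some `λ ∈ S`. -/
structure PlainFactor (F : Λ → Type) [∀ l, AddCommGroup (F l)] [∀ l, Module A (F l)]
    (S : Set Λ) (X : Type) [AddCommGroup X] [Module A X] : Type 1 where
  lam : Λ
  mem : lam ∈ S
  iso : X ≃ₗ[A] F lam

/-- `M` has a finite filtration with factors among the modules `F(λ)`, `λ ∈ S`. -/
def InFiltPlain (F : Λ → Type) [∀ l, AddCommGroup (F l)] [∀ l, Module A (F l)]
    (S : Set Λ) (M : Type) [AddCommGroup M] [Module A M] : Prop :=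
  Module.Finite A M ∧
  ∃ (n : ℕ) (c : Fin (n + 1) → Submodule A M), c 0 = ⊥ ∧ c (Fin.last n) = ⊤ ∧ Monotone c ∧
    ∀ i : Fin n, Nonempty (PlainFactor A Λ F S
      (↥(c i.succ) ⧸ (Submodule.comap (c i.succ).subtype (c i.castSucc))))

/-- `X` is a direct summand of `Y` (as `A`-modules). -/
def IsDirectSummand (X Y : Type) [AddCommGroup X] [Module A X] [AddCommGroup Y]
    [Module A Y] : Prop :=
  ∃ (i : X →ₗ[A] Y) (p : Y →ₗ[A] X), p.comp i = LinearMap.id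

/-- `X` belongs to the additive closure `add T`. -/
def InAdd (T : Type) [AddCommGroup T] [Module A T] (X : Type) [AddCommGroup X]
    [Module A X] : Prop :=
  ∃ n : ℕ, IsDirectSummand A X (Fin n → T)

/-- A split quasi-hereditary structure on the `R`-algebra `A` with standard modules
`Δ(λ)`, `λ ∈ Λ` (following Rouquier's module-theoretic definition). -/
structure SplitQH (Δ : Λ → Type) [∀ l, AddCommGroup (Δ l)] [∀ l, Module R (Δ l)]
    [∀ l, Module A (Δ l)] [∀ l, IsScalarTower R A (Δ l)] : Type 1 where
  algFin : Module.Finite R A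
  algProj : Module.Projective R A
  deltaFinA : ∀ l, Module.Finite A (Δ l)
  deltaFinR : ∀ l, Module.Finite R (Δ l)
  deltaProjR : ∀ l, Module.Projective R (Δ l)
  hom_le : ∀ l m : Λ, (∃ f : Δ l →ₗ[A] Δ m, f ≠ 0) → l ≤ m
  endIso : ∀ l, Nonempty ((Module.End A (Δ l)) ≃ₐ[R] R)
  P : Λ → ModuleCat.{0} A
  P_proj : ∀ l, Module.Projective A (P l)
  P_fin : ∀ l, Module.Finite A (P l)
  epi : ∀ l, (P l : Type) →ₗ[A] Δ l
  epi_surj : ∀ l, Function.Surjective (epi l)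
  ker_filt : ∀ l, InFilt R A Λ Δ {m | l < m} ↥(LinearMap.ker (epi l))
  add_gen : ∀ (Q : ModuleCat.{0} A), Module.Finite A Q → Module.Projective A Q →
    InAdd A (∀ l, (P l : Type)) Q

/-- Vanishing of `Ext^i_A(M, N)` (computed in the abelian category of `A`-modules). -/
def extVanish (M : Type) [AddCommGroup M] [Module A M] (N : Type) [AddCommGroup N]
    [Module A N] (i : ℕ) : Prop :=
  Subsingleton (((Ext ℤ (ModuleCat.{0} A) i).obj
    (Opposite.op (ModuleCat.of A M))).obj (ModuleCat.of A N))

/-- `∇` is a family of costandard modules for the split quasi-hereditary algebra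
`(A, {Δ(λ)})`: the `R`-linear duals `D∇(λ)` make `A^op` split quasi-hereditary (with the same
poset), and the `Ext`-orthogonality relations with the standard modules hold. -/
def IsCostandard (Δ : Λ → Type) [∀ l, AddCommGroup (Δ l)] [∀ l, Module R (Δ l)]
    [∀ l, Module A (Δ l)] [∀ l, IsScalarTower R A (Δ l)]
    (N : Λ → Type) [∀ l, AddCommGroup (N l)] [∀ l, Module R (N l)]
    [∀ l, Module A (N l)] [∀ l, IsScalarTower R A (N l)] : Prop :=
  Nonempty (SplitQH R Aᵐᵒᵖ Λ (fun l => (N l →ₗ[R] R))) ∧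
  (∀ l, Nonempty ((Δ l →ₗ[A] N l) ≃ₗ[R] R)) ∧
  (∀ l m, l ≠ m → ∀ f : Δ l →ₗ[A] N m, f = 0) ∧
  (∀ l m : Λ, ∀ i : ℕ, 0 < i → extVanish A (Δ l) (N m) i)

/-- A bundled family of costandard modules. -/
structure CostandardFamily (Δ : Λ → Type) [∀ l, AddCommGroup (Δ l)] [∀ l, Module R (Δ l)]
    [∀ l, Module A (Δ l)] [∀ l, IsScalarTower R A (Δ l)] : Type 1 where
  Nab : Λ → Type
  [acg : ∀ l, AddCommGroup (Nab l)]
  [modR : ∀ l, Module R (Nab l)]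
  [modA : ∀ l, Module A (Nab l)]
  [tower : ∀ l, IsScalarTower R A (Nab l)]
  cost : IsCostandard R A Λ Δ Nab

attribute [instance] CostandardFamily.acg CostandardFamily.modR CostandardFamily.modA
  CostandardFamily.tower

/-- `T` is a family of (partial) tilting modules forming a characteristic tilting module
`⊕ T(λ)`: each `T(λ)` admits an exact sequence `0 → Δ(λ) → T(λ) → X(λ) → 0` with
`X(λ) ∈ F(Δ̃_{μ<λ})` and an exact sequence `0 → Y(λ) → T(λ) → ∇(λ) → 0` with
`Y(λ) ∈ F(∇̃_{μ<λ})`. -/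
def IsCharTilting (Δ : Λ → Type) [∀ l, AddCommGroup (Δ l)] [∀ l, Module R (Δ l)]
    [∀ l, Module A (Δ l)] [∀ l, IsScalarTower R A (Δ l)]
    (N : Λ → Type) [∀ l, AddCommGroup (N l)] [∀ l, Module R (N l)]
    [∀ l, Module A (N l)] [∀ l, IsScalarTower R A (N l)]
    (T : Λ → Type) [∀ l, AddCommGroup (T l)] [∀ l, Module A (T l)] : Prop :=
  ∀ l : Λ,
    (∃ f : Δ l →ₗ[A] T l, Function.Injective f ∧
      InFilt R A Λ Δ {m | m < l} ((T l) ⧸ LinearMap.range f)) ∧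
    (∃ g : T l →ₗ[A] N l, Function.Surjective g ∧
      InFilt R A Λ N {m | m < l} ↥(LinearMap.ker g))

end Core

end

noncomputable section

/-!
Since `End_A(Δ(l)) = R`, the modules `Δ(l) ⊗_R U` are exactly the objects of `add Δ(l)`, so `F(Δ̃)`
consists of the modules filtered by objects of the categories `add Δ(l)`.

If no element of `S` lies strictly above `l`, then maps from `Δ(l)` lift along epimorphisms out of
modules filtered by `S`: they lift on the projective module `P(l)`, and the lift vanishes on the
kernel of `P(l) → Δ(l)`, which is filtered by various `Δ(k)` with `k > l`. For `l` maximal in `S`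
the layers of type `l` of a filtered module `M` can therefore be moved to the bottom, which gives a
submodule `D` in `add Δ(l)` such that `M / D` is filtered by `S \ {l}`, whence
`Hom_A(D, M / D) = 0`.

Closure under direct summands follows by induction on `S`, because `D` is preserved by every
endomorphism of `M`. For the kernel of an epimorphism `M → X` with `X` in `add Δ(m)`, either no
element of `S` lies above `m` and the epimorphism splits, or some maximal element `l` of `S` does;
then `Hom_A(D, X) = 0`, so the epimorphism factors through `M / D` and induction applies.
-/

section AdditiveClosure

variable {A : Type} [Ring A]

namespace IsDirectSummand

variable {X Y Z : Type} [AddCommGroup X] [Module A X] [AddCommGroup Y] [Module A Y]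
  [AddCommGroup Z] [Module A Z]

lemma trans (hXY : IsDirectSummand A X Y) (hYZ : IsDirectSummand A Y Z) :
    IsDirectSummand A X Z := by
  obtain ⟨i, p, hpi⟩ := hXY
  obtain ⟨j, q, hqj⟩ := hYZ
  refine ⟨j ∘ₗ i, p ∘ₗ q, ?_⟩
  rw [LinearMap.comp_assoc, ← LinearMap.comp_assoc i j q, hqj, LinearMap.id_comp, hpi]

lemma of_equiv (e : X ≃ₗ[A] Y) : IsDirectSummand A X Y :=
  ⟨e, e.symm, e.symm_comp⟩

lemma ker_of_section {g : X →ₗ[A] Y} {s : Y →ₗ[A] X} (hs : g ∘ₗ s = LinearMap.id) :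
    IsDirectSummand A (LinearMap.ker g) X := by
  have hg := LinearMap.surjective_of_comp_eq_id _ _ hs
  obtain ⟨r, hr⟩ : ∃ r, r ∘ₗ (LinearMap.ker g).subtype = LinearMap.id :=
    (((LinearMap.exact_subtype_ker_map g).split_tfae (LinearMap.ker g).subtype_injective hg).out
      0 1 rfl rfl).1 ⟨s, hs⟩
  exact ⟨_, r, hr⟩

variable {i : X →ₗ[A] Y} {p : Y →ₗ[A] X} {D : Submodule A Y}

lemma comap (hpi : p ∘ₗ i = LinearMap.id) (hD : D ≤ D.comap (i ∘ₗ p)) :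
    IsDirectSummand A (D.comap i) D :=
  ⟨i.submoduleComap D, p.restrict hD, LinearMap.ext fun x =>
    Subtype.ext (LinearMap.congr_fun hpi (x : X))⟩

lemma quotient_comap (hpi : p ∘ₗ i = LinearMap.id) (hD : D ≤ D.comap (i ∘ₗ p)) :
    IsDirectSummand A (X ⧸ D.comap i) (Y ⧸ D) := by
  refine ⟨Submodule.mapQ _ _ i le_rfl, Submodule.mapQ _ _ p hD, ?_⟩
  rw [← Submodule.mapQ_comp]
  simp only [hpi, Submodule.mapQ_id]

end IsDirectSummand

namespace InAdd

variable {D X Y Z : Type} [AddCommGroup D] [Module A D] [AddCommGroup X] [Module A X]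
  [AddCommGroup Y] [Module A Y] [AddCommGroup Z] [Module A Z]

lemma of_dualBasis {ι : Type*} [Fintype ι] (i : ι → X →ₗ[A] D) (p : ι → D →ₗ[A] X)
    (h : ∀ x, ∑ j, p j (i j x) = x) : InAdd A D X := by
  let e := Fintype.equivFin ι
  refine ⟨Fintype.card ι, LinearMap.pi fun k => i (e.symm k),
    ∑ k, p (e.symm k) ∘ₗ LinearMap.proj k, LinearMap.ext fun x => ?_⟩
  simpa using (e.symm.sum_comp fun j => p j (i j x)).trans (h x)

lemma exists_dualBasis (h : InAdd A D X) :
    ∃ (n : ℕ) (i : Fin n → X →ₗ[A] D) (p : Fin n → D →ₗ[A] X),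
      ∀ x, ∑ j, p j (i j x) = x := by
  obtain ⟨n, i, p, hpi⟩ := h
  refine ⟨n, fun j => LinearMap.proj j ∘ₗ i, fun j => p ∘ₗ LinearMap.single A (fun _ => D) j,
    fun x => ?_⟩
  simpa [← map_sum, Finset.univ_sum_single] using LinearMap.congr_fun hpi x

lemma of_isDirectSummand (hY : InAdd A D Y) (hXY : IsDirectSummand A X Y) : InAdd A D X :=
  hY.imp fun _ => hXY.trans

lemma of_equiv (hX : InAdd A D X) (e : X ≃ₗ[A] Y) : InAdd A D Y :=
  hX.of_isDirectSummand (.of_equiv e.symm)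

lemma of_subsingleton [Subsingleton X] : InAdd A D X :=
  of_dualBasis (ι := Empty) nofun nofun fun _ => Subsingleton.elim _ _

lemma self : InAdd A D D :=
  of_dualBasis (ι := Unit) (fun _ => LinearMap.id) (fun _ => LinearMap.id) (by simp)

lemma prod (hX : InAdd A D X) (hY : InAdd A D Y) : InAdd A D (X × Y) := by
  obtain ⟨n, i, p, hpi⟩ := hX.exists_dualBasis
  obtain ⟨m, j, q, hqj⟩ := hY.exists_dualBasis
  refine of_dualBasis
    (Sum.elim (fun k => i k ∘ₗ LinearMap.fst A X Y) fun k => j k ∘ₗ LinearMap.snd A X Y)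
    (Sum.elim (fun k => LinearMap.inl A X Y ∘ₗ p k) fun k => LinearMap.inr A X Y ∘ₗ q k)
    fun x => ?_
  ext <;> simp [Prod.fst_sum, Prod.snd_sum, hpi, hqj]

lemma finite [Module.Finite A D] (hX : InAdd A D X) : Module.Finite A X := by
  obtain ⟨_, _, p, hpi⟩ := hX
  exact .of_surjective p (LinearMap.surjective_of_comp_eq_id _ _ hpi)

lemma projective [Module.Projective A D] (hX : InAdd A D X) : Module.Projective A X := by
  obtain ⟨n, i, p, hpi⟩ := hX
  have := Module.Projective.of_equiv
    (DFinsupp.linearEquivFunOnFintype (R := A) (M := fun _ : Fin n => D))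
  exact .of_split i p hpi

lemma eq_zero_of_left (hX : InAdd A D X) (hD : ∀ f : D →ₗ[A] Y, f = 0) (f : X →ₗ[A] Y) :
    f = 0 := by
  obtain ⟨n, i, p, hpi⟩ := hX.exists_dualBasis
  ext x
  rw [← hpi x, map_sum]
  exact Finset.sum_eq_zero fun j _ => LinearMap.congr_fun (hD (f ∘ₗ p j)) (i j x)

lemma eq_zero_of_right (hY : InAdd A D Y) (hD : ∀ f : X →ₗ[A] D, f = 0) (f : X →ₗ[A] Y) :
    f = 0 := by
  obtain ⟨n, i, p, hpi⟩ := hY.exists_dualBasis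
  ext x
  have hif (j) : i j (f x) = 0 := LinearMap.congr_fun (hD (i j ∘ₗ f)) x
  rw [← hpi (f x)]
  exact Finset.sum_eq_zero fun j _ => by rw [hif, map_zero]

lemma exists_lift {g : Y →ₗ[A] Z} (hX : InAdd A D X)
    (hD : ∀ f : D →ₗ[A] Z, ∃ f' : D →ₗ[A] Y, g ∘ₗ f' = f) (f : X →ₗ[A] Z) :
    ∃ f' : X →ₗ[A] Y, g ∘ₗ f' = f := by
  obtain ⟨n, i, p, hpi⟩ := hX.exists_dualBasis
  choose F hF using fun j => hD (f ∘ₗ p j)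
  refine ⟨∑ j, F j ∘ₗ i j, LinearMap.ext fun x => ?_⟩
  have hF' (j) : g (F j (i j x)) = f (p j (i j x)) := LinearMap.congr_fun (hF j) (i j x)
  simp only [LinearMap.comp_apply, LinearMap.sum_apply, map_sum, hF']
  rw [← map_sum, hpi]

end InAdd

end AdditiveClosure

section TensorFactors

open TensorProduct.AlgebraTensorModule (lTensor)

variable {R : Type} [CommRing R] {A : Type} [Ring A] [Algebra R A]
  {D : Type} [AddCommGroup D] [Module R D] [Module A D] [IsScalarTower R A D]

lemma InAdd.of_finite_of_projective {U : Type} [AddCommGroup U] [Module R U] [Module.Finite R U]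
    [Module.Projective R U] : InAdd R R U := by
  obtain ⟨n, p, i, -, -, hpi⟩ := Module.Finite.exists_comp_eq_id_of_projective R U
  exact ⟨n, i, p, hpi⟩

lemma InAdd.tensorProduct {U : Type} [AddCommGroup U] [Module R U] (hU : InAdd R R U) :
    InAdd A D (D ⊗[R] U) := by
  obtain ⟨n, i, p, hpi⟩ := hU.exists_dualBasis
  let ρ := TensorProduct.AlgebraTensorModule.rid R A D
  refine .of_dualBasis (fun j => ρ.toLinearMap ∘ₗ lTensor A D (i j))
    (fun j => lTensor A D (p j) ∘ₗ ρ.symm.toLinearMap) fun x => ?_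
  simp only [LinearMap.comp_apply, LinearEquiv.coe_coe, ρ.symm_apply_apply]
  induction x with
  | zero => simp only [map_zero, Finset.sum_const_zero]
  | add x y hx hy => simp only [map_add, Finset.sum_add_distrib, hx, hy]
  | tmul d u => simp only [TensorProduct.AlgebraTensorModule.lTensor_tmul,
      ← TensorProduct.tmul_sum, hpi]

section

variable {X : Type} [AddCommGroup X] [Module R X] [Module A X] [IsScalarTower R A X]

/-- The evaluation map `D ⊗_R Hom_A(D, X) → X`. When `End_A(D) = R` it is an isomorphism for `X` in
`add D`, and so writes `X` in the form `D ⊗_R U`. -/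
def tensorHomEval (R A D X : Type) [CommRing R] [Ring A] [Algebra R A] [AddCommGroup D]
    [Module R D] [Module A D] [IsScalarTower R A D] [AddCommGroup X] [Module R X] [Module A X]
    [IsScalarTower R A X] : D ⊗[R] (D →ₗ[A] X) →ₗ[A] X :=
  TensorProduct.AlgebraTensorModule.lift
    { toFun := LinearMap.applyₗ' R
      map_add' := map_add _
      map_smul' a d := LinearMap.ext fun f => f.map_smul a d }

@[simp] lemma tensorHomEval_tmul (d : D) (f : D →ₗ[A] X) :
    tensorHomEval R A D X (d ⊗ₜ f) = f d :=
  rfl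

lemma InAdd.linearMap {K : Type} [AddCommGroup K] [Module A K] (hX : InAdd A D X) :
    InAdd R (K →ₗ[A] D) (K →ₗ[A] X) := by
  obtain ⟨n, i, p, hpi⟩ := hX.exists_dualBasis
  refine .of_dualBasis (fun j => LinearMap.compRight R (i j)) (fun j => LinearMap.compRight R (p j))
    fun f => ?_
  ext d
  simp [hpi]

lemma bijective_tensorHomEval (e : Module.End A D ≃ₐ[R] R) (hX : InAdd A D X) :
    Function.Bijective (tensorHomEval R A D X) := by
  obtain ⟨n, i, p, hpi⟩ := hX.exists_dualBasis
  have he (f : Module.End A D) (d : D) : f d = e f • d := by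
    rw [← Module.algebraMap_end_apply R A, ← e.symm.commutes, Algebra.algebraMap_self_apply,
      e.symm_apply_apply]
  have hp (f : D →ₗ[A] X) : ∑ j, e (i j ∘ₗ f) • p j = f := by
    ext d
    simp [← LinearMap.map_smul_of_tower, ← he, hpi]
  refine Function.bijective_iff_has_inverse.2 ⟨fun x => ∑ j, i j x ⊗ₜ p j, fun y => ?_, fun x => ?_⟩
  · induction y with
    | zero => simp
    | add y z hy hz => simp [TensorProduct.add_tmul, Finset.sum_add_distrib, hy, hz]
    | tmul d f =>
      calc ∑ j, i j (f d) ⊗ₜ p j = ∑ j, d ⊗ₜ (e (i j ∘ₗ f) • p j) := by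
            simp only [← TensorProduct.smul_tmul, ← he, LinearMap.comp_apply]
        _ = d ⊗ₜ f := by rw [← TensorProduct.tmul_sum, hp]
  · simp [hpi]

end

variable {Λ : Type} {Δ : Λ → Type} [∀ l, AddCommGroup (Δ l)] [∀ l, Module R (Δ l)]
  [∀ l, Module A (Δ l)] [∀ l, IsScalarTower R A (Δ l)] {S : Set Λ}
  {X : Type} [AddCommGroup X] [Module A X]

lemma TensorFactor.inAdd (t : TensorFactor R A Λ Δ S X) : InAdd A (Δ t.lam) X :=
  have := t.fin
  have := t.proj
  (InAdd.tensorProduct .of_finite_of_projective).of_equiv t.iso.symm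

lemma InAdd.nonempty_tensorFactor {l : Λ} (e : Module.End A (Δ l) ≃ₐ[R] R) (hl : l ∈ S)
    (hX : InAdd A (Δ l) X) : Nonempty (TensorFactor R A Λ Δ S X) := by
  let : Module R X := Module.compHom X (algebraMap R A)
  have : IsScalarTower R A X := .of_algebraMap_smul fun _ _ => rfl
  have : Module.Finite R (Δ l →ₗ[A] Δ l) := .equiv e.symm.toLinearEquiv
  have : Module.Projective R (Δ l →ₗ[A] Δ l) := .of_equiv e.symm.toLinearEquiv
  have hHom := hX.linearMap (R := R) (K := Δ l)
  exact ⟨⟨l, hl, ModuleCat.of R (Δ l →ₗ[A] X), hHom.finite, hHom.projective,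
    (LinearEquiv.ofBijective _ (bijective_tensorHomEval e hX)).symm⟩⟩

end TensorFactors

section Subquotients

variable {A M M' : Type*} [Ring A] [AddCommGroup M] [Module A M] [AddCommGroup M'] [Module A M']

/-- `ker g`, viewed as the kernel of the restriction of `g` to the preimage of a submodule. -/
def kerSubmoduleComapEquiv (g : M →ₗ[A] M') (N : Submodule A M') :
    LinearMap.ker (g.submoduleComap N) ≃ₗ[A] LinearMap.ker g :=
  (LinearEquiv.ofEq _ _ (by rw [LinearMap.submoduleComap, LinearMap.ker_restrict])).trans
    (Submodule.comapSubtypeEquivOfLe (LinearMap.ker_le_comap g))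

/-- An injective map identifies the subquotient `N₂ / N₁` of its source with the one of the
images of `N₁` and `N₂`. -/
def subquotientMapEquiv (f : M →ₗ[A] M') (hf : Function.Injective f) (N₁ N₂ : Submodule A M) :
    (N₂ ⧸ N₁.comap N₂.subtype) ≃ₗ[A]
      (N₂.map f ⧸ (N₁.map f).comap (N₂.map f).subtype) :=
  Submodule.Quotient.equiv _ _ (Submodule.equivMapOfInjective f hf N₂) <| by
    ext y
    obtain ⟨x, rfl⟩ := (Submodule.equivMapOfInjective f hf N₂).surjective y
    simp [hf.eq_iff]

/-- The subquotient `⊤ / N` of `M` is `M / N`. -/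
def subquotientTopEquiv (N : Submodule A M) :
    ((⊤ : Submodule A M) ⧸ N.comap (⊤ : Submodule A M).subtype) ≃ₗ[A] M ⧸ N :=
  Submodule.Quotient.equiv _ _ Submodule.topEquiv <| by
    ext x
    simp

/-- In an exact sequence `0 → K → M → M'`, the identification of `K` with the kernel of `M → M'`. -/
def equivKerOfExact {K : Type*} [AddCommGroup K] [Module A K] {f : K →ₗ[A] M} {g : M →ₗ[A] M'}
    (hf : Function.Injective f) (hfg : Function.Exact f g) : K ≃ₗ[A] LinearMap.ker g :=
  (LinearEquiv.ofInjective f hf).trans (LinearEquiv.ofEq _ _ hfg.linearMap_ker_eq.symm)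

end Subquotients

section Filtrations

variable {A : Type} [Ring A] {Λ : Type}

/-- `M` has a finite filtration whose factors lie in `add (Δ l)` for some `l ∈ S`, built from the
bottom by adding one top factor at a time. Unlike the modules `Δ l ⊗_R U`, the objects of
`add (Δ l)` are visibly closed under finite sums and direct summands, and no action of `R` is
involved. -/
inductive AddFiltered (A : Type) [Ring A] {Λ : Type} (Δ : Λ → Type) [∀ l, AddCommGroup (Δ l)]
    [∀ l, Module A (Δ l)] (S : Set Λ) :
    ∀ (M : Type) [AddCommGroup M] [Module A M], Prop
  | of_subsingleton (M : Type) [AddCommGroup M] [Module A M] (hM : Subsingleton M) :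
      AddFiltered A Δ S M
  | of_submodule (M : Type) [AddCommGroup M] [Module A M] (N : Submodule A M) (l : Λ)
      (hN : AddFiltered A Δ S N) (hl : l ∈ S) (hQ : InAdd A (Δ l) (M ⧸ N)) :
      AddFiltered A Δ S M

variable {Δ : Λ → Type} [∀ l, AddCommGroup (Δ l)] [∀ l, Module A (Δ l)] {S T : Set Λ}

namespace AddFiltered

variable {K M M' : Type} [AddCommGroup K] [Module A K] [AddCommGroup M] [Module A M]
  [AddCommGroup M'] [Module A M']

lemma of_equiv (hM : AddFiltered A Δ S M) (e : M ≃ₗ[A] M') : AddFiltered A Δ S M' := by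
  induction hM generalizing M' with
  | of_subsingleton M hM => exact .of_subsingleton M' e.symm.toEquiv.subsingleton
  | of_submodule M N l _ hl hQ ih =>
    exact .of_submodule M' (N.map e.toLinearMap) l (ih (e.submoduleMap N)) hl
      (hQ.of_equiv (Submodule.Quotient.equiv N _ e rfl))

lemma mono (hM : AddFiltered A Δ S M) (hST : S ⊆ T) : AddFiltered A Δ T M := by
  induction hM with
  | of_subsingleton M hM => exact .of_subsingleton M hM
  | of_submodule M N l _ hl hQ ih => exact .of_submodule M N l ih (hST hl) hQ

lemma subsingleton_of_empty (hM : AddFiltered A Δ ∅ M) : Subsingleton M := by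
  cases hM with
  | of_subsingleton _ hM => exact hM
  | of_submodule _ N l hN hl hQ => exact hl.elim

lemma of_inAdd {l : Λ} (hl : l ∈ S) (hM : InAdd A (Δ l) M) : AddFiltered A Δ S M :=
  .of_submodule M ⊥ l (.of_subsingleton _ inferInstance) hl
    (hM.of_equiv (Submodule.quotEquivOfEqBot ⊥ rfl).symm)

lemma of_ker {g : M →ₗ[A] M'} (hg : Function.Surjective g)
    (hker : AddFiltered A Δ S (LinearMap.ker g)) (hM' : AddFiltered A Δ S M') :
    AddFiltered A Δ S M := by
  induction hM' generalizing M with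
  | of_subsingleton M' _ =>
    have hg0 : LinearMap.ker g = ⊤ := LinearMap.ker_eq_top.2 (Subsingleton.elim _ _)
    exact hker.of_equiv (LinearEquiv.ofTop _ hg0)
  | of_submodule M' N l _ hl hQ ih =>
    refine .of_submodule M (N.comap g) l
      (ih (g.submoduleComap_surjective_of_surjective N hg) (hker.of_equiv ?_)) hl
      (hQ.of_equiv ?_)
    · exact (kerSubmoduleComapEquiv g N).symm
    · exact ((Submodule.quotEquivOfEq _ _ (by simp [LinearMap.ker_comp])).trans
        ((N.mkQ ∘ₗ g).quotKerEquivOfSurjective (N.mkQ_surjective.comp hg))).symm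

lemma comap {g : M →ₗ[A] M'} (hg : Function.Surjective g) {N : Submodule A M'}
    (hker : AddFiltered A Δ S (LinearMap.ker g)) (hN : AddFiltered A Δ S N) :
    AddFiltered A Δ S (N.comap g) :=
  .of_ker (g.submoduleComap_surjective_of_surjective N hg)
    (hker.of_equiv (kerSubmoduleComapEquiv g N).symm) hN

lemma of_quotient {N : Submodule A M} (hN : AddFiltered A Δ S N)
    (hQ : AddFiltered A Δ S (M ⧸ N)) : AddFiltered A Δ S M :=
  .of_ker N.mkQ_surjective
    (hN.of_equiv (equivKerOfExact N.subtype_injective (LinearMap.exact_subtype_mkQ N))) hQ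

lemma quotient_map_subtype {N : Submodule A M} {D : Submodule A N}
    (hN : AddFiltered A Δ S (N ⧸ D)) (hM : AddFiltered A Δ S (M ⧸ N)) :
    AddFiltered A Δ S (M ⧸ D.map N.subtype) := by
  let D' := D.map N.subtype
  have hker : LinearMap.ker (D'.mkQ ∘ₗ N.subtype) = D := by
    rw [LinearMap.ker_comp, Submodule.ker_mkQ,
      Submodule.comap_map_eq_of_injective N.subtype_injective]
  have hrange : LinearMap.range (D'.mkQ ∘ₗ N.subtype) = N.map D'.mkQ := by
    rw [LinearMap.range_comp, Submodule.range_subtype]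
  refine .of_quotient (N := N.map D'.mkQ) (hN.of_equiv ?_) (hM.of_equiv ?_)
  · exact (Submodule.quotEquivOfEq _ _ hker.symm).trans <|
      (LinearMap.quotKerEquivRange _).trans (LinearEquiv.ofEq _ _ hrange)
  · exact (Submodule.quotientQuotientEquivQuotient D' N (Submodule.map_subtype_le N D)).symm

lemma prod (hM : AddFiltered A Δ S M) (hM' : AddFiltered A Δ S M') :
    AddFiltered A Δ S (M × M') :=
  .of_ker (g := LinearMap.fst A M M') LinearMap.fst_surjective
    (hM'.of_equiv (equivKerOfExact LinearMap.inr_injective .inr_fst)) hM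

lemma pi {ι : Type} [Finite ι] {M : ι → Type} [∀ i, AddCommGroup (M i)] [∀ i, Module A (M i)]
    (hM : ∀ i, AddFiltered A Δ S (M i)) : AddFiltered A Δ S (∀ i, M i) :=
  Module.pi_induction' A (motive := fun M _ _ => AddFiltered A Δ S M)
    (motive' := fun M _ _ => AddFiltered A Δ S M) (fun e hM => hM.of_equiv e)
    (fun e hM => hM.of_equiv e) (.of_subsingleton _ inferInstance) (fun hM hM' => hM.prod hM') M hM

lemma finite [∀ l, Module.Finite A (Δ l)] (hM : AddFiltered A Δ S M) : Module.Finite A M := by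
  induction hM with
  | of_subsingleton M hM => exact inferInstance
  | of_submodule M N l _ _ hQ ih =>
    have := hQ.finite
    exact Module.Finite.of_submodule_quotient N

lemma eq_zero_of_right (hM : AddFiltered A Δ S M) (hΔ : ∀ l ∈ S, ∀ f : K →ₗ[A] Δ l, f = 0)
    (f : K →ₗ[A] M) : f = 0 := by
  induction hM with
  | of_subsingleton M _ => exact Subsingleton.elim _ _
  | of_submodule M N l _ hl hQ ih =>
    have hf (x : K) : f x ∈ N := by
      rw [← Submodule.Quotient.mk_eq_zero]
      exact LinearMap.congr_fun (hQ.eq_zero_of_right (hΔ l hl) (N.mkQ ∘ₗ f)) x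
    rw [← LinearMap.subtype_comp_codRestrict f N hf, ih (f.codRestrict N hf), LinearMap.comp_zero]

lemma eq_zero_of_left (hM : AddFiltered A Δ S M) (hΔ : ∀ l ∈ S, ∀ f : Δ l →ₗ[A] K, f = 0)
    (f : M →ₗ[A] K) : f = 0 := by
  induction hM with
  | of_subsingleton M _ => exact Subsingleton.elim _ _
  | of_submodule M N l _ hl hQ ih =>
    have hf : N ≤ LinearMap.ker f := LinearMap.le_ker_iff_comp_subtype_eq_zero.2 (ih _)
    rw [← N.liftQ_mkQ f hf, hQ.eq_zero_of_left (hΔ l hl) (N.liftQ f hf), LinearMap.zero_comp]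

end AddFiltered

end Filtrations

section TensorFiltrations

variable {R : Type} [CommRing R] {A : Type} [Ring A] [Algebra R A] {Λ : Type}
  {Δ : Λ → Type} [∀ l, AddCommGroup (Δ l)] [∀ l, Module R (Δ l)]
  [∀ l, Module A (Δ l)] [∀ l, IsScalarTower R A (Δ l)]
  {S : Set Λ} {M : Type} [AddCommGroup M] [Module A M]

lemma InFilt.addFiltered (hM : InFilt R A Λ Δ S M) : AddFiltered A Δ S M := by
  obtain ⟨-, n, c, hbot, htop, hmono, hfac⟩ := hM
  have hc (i : Fin (n + 1)) : AddFiltered A Δ S (c i) := by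
    induction i using Fin.induction with
    | zero => exact hbot ▸ .of_subsingleton _ inferInstance
    | succ i ih =>
      obtain ⟨t⟩ := hfac i
      exact .of_submodule _ _ t.lam
        (ih.of_equiv (Submodule.comapSubtypeEquivOfLe (hmono i.castSucc_le_succ)).symm)
        t.mem t.inAdd
  exact (hc (Fin.last n)).of_equiv (LinearEquiv.ofTop _ htop)

lemma InFilt.of_subsingleton [Subsingleton M] : InFilt R A Λ Δ S M :=
  ⟨inferInstance, 0, fun _ => ⊥, rfl, Subsingleton.elim _ _, monotone_const, nofun⟩

lemma InFilt.of_submodule {N : Submodule A M} (hN : InFilt R A Λ Δ S N)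
    (t : TensorFactor R A Λ Δ S (M ⧸ N)) [Module.Finite A (M ⧸ N)] : InFilt R A Λ Δ S M := by
  obtain ⟨_, n, c, hbot, htop, hmono, hfac⟩ := hN
  let c' : Fin (n + 2) → Submodule A M :=
    Fin.snoc (α := fun _ => Submodule A M) (fun i => (c i).map N.subtype) ⊤
  have hc' (i : Fin (n + 1)) : c' i.castSucc = (c i).map N.subtype := Fin.snoc_castSucc ..
  have hc'_last : c' (Fin.last _) = ⊤ := Fin.snoc_last ..
  refine ⟨.of_submodule_quotient N, n + 1, c', ?_, hc'_last,
    Fin.monotone_iff_le_succ.2 fun i => ?_, fun i => ?_⟩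
  · rw [← Fin.castSucc_zero, hc', hbot, Submodule.map_bot]
  · cases i using Fin.lastCases with
    | last => exact le_top.trans_eq hc'_last.symm
    | cast j =>
      rw [Fin.succ_castSucc, hc', hc']
      exact Submodule.map_mono (hmono j.castSucc_le_succ)
  · cases i using Fin.lastCases with
    | last =>
      rw [Fin.succ_last, hc'_last, hc', htop, Submodule.map_subtype_top]
      exact ⟨{ t with iso := (subquotientTopEquiv N).trans t.iso }⟩
    | cast j =>
      rw [Fin.succ_castSucc, hc', hc']
      refine (hfac j).map fun t => { t with iso := ?_ }
      exact (subquotientMapEquiv _ N.subtype_injective _ _).symm.trans t.iso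

lemma AddFiltered.inFilt [∀ l, Module.Finite A (Δ l)]
    (e : ∀ l, Nonempty (Module.End A (Δ l) ≃ₐ[R] R)) (hM : AddFiltered A Δ S M) :
    InFilt R A Λ Δ S M := by
  induction hM with
  | of_subsingleton M hM => exact .of_subsingleton
  | of_submodule M N l _ hl hQ ih =>
    have := hQ.finite
    obtain ⟨el⟩ := e l
    obtain ⟨t⟩ := hQ.nonempty_tensorFactor el hl
    exact ih.of_submodule t

lemma inFilt_iff_addFiltered [∀ l, Module.Finite A (Δ l)]
    (e : ∀ l, Nonempty (Module.End A (Δ l) ≃ₐ[R] R)) :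
    InFilt R A Λ Δ S M ↔ AddFiltered A Δ S M :=
  ⟨InFilt.addFiltered, AddFiltered.inFilt e⟩

end TensorFiltrations

section SplitQuasiHereditary

lemma exists_equiv_prod_of_mkQ_section {A M : Type*} [Ring A] [AddCommGroup M] [Module A M]
    {N : Submodule A M} {s : (M ⧸ N) →ₗ[A] M} (hs : N.mkQ ∘ₗ s = LinearMap.id)
    (D : Submodule A N) :
    ∃ D' : Submodule A M, Nonempty ((D × (M ⧸ N)) ≃ₗ[A] D') ∧ Nonempty ((N ⧸ D) ≃ₗ[A] M ⧸ D') := by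
  obtain ⟨e, -⟩ := ((LinearMap.exact_subtype_mkQ N).split_tfae N.subtype_injective
    N.mkQ_surjective |>.out 0 2 rfl rfl).1 ⟨s, hs⟩
  let φ : D × (M ⧸ N) →ₗ[A] M := e.symm.toLinearMap ∘ₗ D.subtype.prodMap LinearMap.id
  let ψ : M →ₗ[A] N ⧸ D := D.mkQ ∘ₗ LinearMap.fst A N (M ⧸ N) ∘ₗ e.toLinearMap
  have hφ : Function.Injective φ :=
    e.symm.injective.comp (D.subtype_injective.prodMap Function.injective_id)
  have hψ : Function.Surjective ψ :=
    D.mkQ_surjective.comp (Prod.fst_surjective.comp e.surjective)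
  have hφψ : Function.Exact φ ψ := fun y => by
    constructor
    · intro hy
      have hyD : (e y).1 ∈ D := (Submodule.Quotient.mk_eq_zero D).1 hy
      exact ⟨(⟨_, hyD⟩, (e y).2), e.symm_apply_apply y⟩
    · rintro ⟨x, rfl⟩
      simp [φ, ψ]
  exact ⟨LinearMap.range φ, ⟨.ofInjective φ hφ⟩, ⟨(hφψ.linearEquivOfSurjective hψ).symm⟩⟩

lemma exists_lift_of_hom_ker_eq_zero {A P D M Z : Type*} [Ring A] [AddCommGroup P] [Module A P]
    [AddCommGroup D] [Module A D] [AddCommGroup M] [Module A M] [AddCommGroup Z] [Module A Z]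
    [Module.Projective A P] {π : P →ₗ[A] D} (hπ : Function.Surjective π)
    (hker : ∀ u : LinearMap.ker π →ₗ[A] M, u = 0) {g : M →ₗ[A] Z} (hg : Function.Surjective g)
    (f : D →ₗ[A] Z) : ∃ f' : D →ₗ[A] M, g ∘ₗ f' = f := by
  obtain ⟨u, hu⟩ := Module.projective_lifting_property g (f ∘ₗ π) hg
  have hu' : LinearMap.ker π ≤ LinearMap.ker u :=
    LinearMap.le_ker_iff_comp_subtype_eq_zero.2 (hker _)
  let e := π.quotKerEquivOfSurjective hπ
  refine ⟨(LinearMap.ker π).liftQ u hu' ∘ₗ e.symm.toLinearMap, LinearMap.ext fun d => ?_⟩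
  obtain ⟨x, rfl⟩ := hπ d
  have hx : e.symm (π x) = Submodule.Quotient.mk x := e.symm_apply_apply (Submodule.Quotient.mk x)
  simpa [hx] using LinearMap.congr_fun hu x

variable {R : Type} [CommRing R] {A : Type} [Ring A] [Algebra R A]
  {Λ : Type} [PartialOrder Λ]
  {Δ : Λ → Type} [∀ l, AddCommGroup (Δ l)] [∀ l, Module R (Δ l)]
  [∀ l, Module A (Δ l)] [∀ l, IsScalarTower R A (Δ l)] {S : Set Λ}
  {M : Type} [AddCommGroup M] [Module A M] {X : Type} [AddCommGroup X] [Module A X]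

namespace SplitQH

lemma hom_eq_zero (h : SplitQH R A Λ Δ) {l m : Λ} (hlm : ¬ l ≤ m) (f : Δ l →ₗ[A] Δ m) : f = 0 :=
  not_not.1 fun hf => hlm (h.hom_le l m ⟨f, hf⟩)

lemma exists_lift (h : SplitQH R A Λ Δ) {l : Λ} (hl : ∀ s ∈ S, ¬ l < s)
    (hM : AddFiltered A Δ S M) (hX : InAdd A (Δ l) X) {Z : Type} [AddCommGroup Z] [Module A Z]
    {g : M →ₗ[A] Z} (hg : Function.Surjective g) (f : X →ₗ[A] Z) :
    ∃ f' : X →ₗ[A] M, g ∘ₗ f' = f := by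
  -- `P l → Δ l` has its kernel filtered by layers `k > l`, none of which maps to a layer in `S`.
  have := h.P_proj l
  refine hX.exists_lift (exists_lift_of_hom_ker_eq_zero (h.epi_surj l) ?_ hg) f
  refine (h.ker_filt l).addFiltered.eq_zero_of_left fun k hk => ?_
  exact hM.eq_zero_of_right fun s hs => h.hom_eq_zero fun hks => hl s hs (hk.trans_le hks)

lemma exists_inAdd_submodule (h : SplitQH R A Λ Δ) {l : Λ} (hl : ∀ s ∈ S, ¬ l < s)
    (hM : AddFiltered A Δ S M) :
    ∃ D : Submodule A M, InAdd A (Δ l) D ∧ AddFiltered A Δ (S \ {l}) (M ⧸ D) := by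
  induction hM with
  | of_subsingleton M _ => exact ⟨⊥, .of_subsingleton, .of_subsingleton _ inferInstance⟩
  | of_submodule M N m hN hm hQ ih =>
    obtain ⟨D, hD, hND⟩ := ih
    obtain rfl | hml := eq_or_ne m l
    · obtain ⟨s, hs⟩ := h.exists_lift hl (.of_submodule M N m hN hm hQ) hQ N.mkQ_surjective
        LinearMap.id
      obtain ⟨D', ⟨eD⟩, ⟨eQ⟩⟩ := exists_equiv_prod_of_mkQ_section hs D
      exact ⟨D', (hD.prod hQ).of_equiv eD, hND.of_equiv eQ⟩
    · exact ⟨D.map N.subtype, hD.of_equiv (Submodule.equivMapOfInjective _ N.subtype_injective D),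
        hND.quotient_map_subtype (.of_inAdd ⟨hm, hml⟩ hQ)⟩

lemma addFiltered_of_isDirectSummand [Finite Λ] (h : SplitQH R A Λ Δ)
    (hM : AddFiltered A Δ S M) (hX : IsDirectSummand A X M) : AddFiltered A Δ S X := by
  induction S using WellFoundedLT.induction generalizing M X with
  | ind S ih =>
  obtain ⟨i, p, hpi⟩ := hX
  obtain rfl | hS := S.eq_empty_or_nonempty
  · have := hM.subsingleton_of_empty
    have hi := LinearMap.injective_of_comp_eq_id _ _ hpi
    exact .of_subsingleton X hi.subsingleton
  obtain ⟨l, hlS, hl⟩ := S.toFinite.exists_maximal hS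
  have hl' : ∀ s ∈ S, ¬ l < s := fun s hs hls => hls.not_ge (hl hs hls.le)
  obtain ⟨D, hD, hMD⟩ := h.exists_inAdd_submodule hl' hM
  have hzero (u : D →ₗ[A] M ⧸ D) : u = 0 :=
    hD.eq_zero_of_left (hMD.eq_zero_of_right fun s hs => h.hom_eq_zero fun hls =>
      hl' s hs.1 (hls.lt_of_ne' hs.2)) u
  have hDip : D ≤ D.comap (i ∘ₗ p) := fun x hx => (Submodule.Quotient.mk_eq_zero D).1 <|
    LinearMap.congr_fun (hzero (D.mkQ ∘ₗ i ∘ₗ p ∘ₗ D.subtype)) ⟨x, hx⟩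
  exact .of_quotient (.of_inAdd hlS (hD.of_isDirectSummand (.comap hpi hDip)))
    ((ih _ (Set.sdiff_singleton_ssubset.2 hlS) hMD (.quotient_comap hpi hDip)).mono
      Set.sdiff_subset)

lemma addFiltered_ker_of_inAdd [Finite Λ] (h : SplitQH R A Λ Δ) (hM : AddFiltered A Δ S M)
    {l : Λ} (hX : InAdd A (Δ l) X) {g : M →ₗ[A] X} (hg : Function.Surjective g) :
    AddFiltered A Δ S (LinearMap.ker g) := by
  induction S using WellFoundedLT.induction generalizing M with
  | ind S ih =>
  by_cases hl : ∀ s ∈ S, ¬ l < s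
  · obtain ⟨s, hs⟩ := h.exists_lift hl hM hX hg LinearMap.id
    exact h.addFiltered_of_isDirectSummand hM (.ker_of_section hs)
  push Not at hl
  obtain ⟨s, hsS, hls⟩ := hl
  obtain ⟨k, hsk, hkS, hk⟩ := S.toFinite.exists_le_maximal hsS
  have hlk : ¬ k ≤ l := (hls.trans_le hsk).not_ge
  obtain ⟨D, hD, hMD⟩ := h.exists_inAdd_submodule (fun s hs hks => hks.not_ge (hk hs hks.le)) hM
  have hDg : D ≤ LinearMap.ker g := LinearMap.le_ker_iff_comp_subtype_eq_zero.2 <|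
    hD.eq_zero_of_left (hX.eq_zero_of_right (h.hom_eq_zero hlk)) _
  have hker := ih _ (Set.sdiff_singleton_ssubset.2 hkS) hMD (g := D.liftQ g hDg) <|
    LinearMap.range_eq_top.1 (by rw [Submodule.range_liftQ, LinearMap.range_eq_top.2 hg])
  have hcomap : (LinearMap.ker (D.liftQ g hDg)).comap D.mkQ = LinearMap.ker g := by
    rw [← LinearMap.ker_comp, D.liftQ_mkQ]
  rw [← hcomap]
  refine .comap D.mkQ_surjective ?_ (hker.mono Set.sdiff_subset)
  rw [D.ker_mkQ]
  exact .of_inAdd hkS hD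

lemma addFiltered_ker [Finite Λ] (h : SplitQH R A Λ Δ) (hM : AddFiltered A Δ S M)
    (hX : AddFiltered A Δ S X) {g : M →ₗ[A] X} (hg : Function.Surjective g) :
    AddFiltered A Δ S (LinearMap.ker g) := by
  induction hX generalizing M with
  | of_subsingleton X _ =>
    have hg0 : LinearMap.ker g = ⊤ := LinearMap.ker_eq_top.2 (Subsingleton.elim _ _)
    exact hM.of_equiv (LinearEquiv.ofTop _ hg0).symm
  | of_submodule X N l _ _ hQ ih =>
    have hNg := h.addFiltered_ker_of_inAdd hM hQ (g := N.mkQ ∘ₗ g) (N.mkQ_surjective.comp hg)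
    rw [LinearMap.ker_comp, N.ker_mkQ] at hNg
    exact (ih hNg (g.submoduleComap_surjective_of_surjective N hg)).of_equiv
      (kerSubmoduleComapEquiv g N)

lemma addFiltered_of_projective [Finite Λ] (h : SplitQH R A Λ Δ) [Module.Finite A M]
    [Module.Projective A M] : AddFiltered A Δ Set.univ M := by
  obtain ⟨n, hn⟩ := h.add_gen (ModuleCat.of A M) inferInstance inferInstance
  refine h.addFiltered_of_isDirectSummand (.pi fun _ => .pi fun l => ?_) hn
  exact .of_ker (h.epi_surj l) ((h.ker_filt l).addFiltered.mono (Set.subset_univ _))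
    (.of_inAdd (Set.mem_univ l) .self)

end SplitQH

end SplitQuasiHereditary

/-- The class `C` of `A`-modules is resolving: it contains the finitely generated projective
modules, and it is closed under extensions, direct summands and kernels of epimorphisms. Short exact
sequences are given by their two maps. -/
structure IsResolving (A : Type) [Ring A]
    (C : ∀ (M : Type) [AddCommGroup M] [Module A M], Prop) : Prop where
  of_projective : ∀ (P : Type) [AddCommGroup P] [Module A P], Module.Finite A P →
    Module.Projective A P → C P
  of_extension : ∀ (M₁ M₂ M₃ : Type) [AddCommGroup M₁] [Module A M₁] [AddCommGroup M₂] [Module A M₂]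
    [AddCommGroup M₃] [Module A M₃] (f : M₁ →ₗ[A] M₂) (g : M₂ →ₗ[A] M₃),
    Function.Injective f → Function.Surjective g → Function.Exact f g → C M₁ → C M₃ → C M₂
  of_isDirectSummand : ∀ (M X : Type) [AddCommGroup M] [Module A M] [AddCommGroup X] [Module A X],
    C M → IsDirectSummand A X M → C X
  of_kernel : ∀ (M₁ M₂ M₃ : Type) [AddCommGroup M₁] [Module A M₁] [AddCommGroup M₂]
    [Module A M₂] [AddCommGroup M₃] [Module A M₃] (f : M₁ →ₗ[A] M₂) (g : M₂ →ₗ[A] M₃),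
    Function.Injective f → Function.Surjective g → Function.Exact f g → C M₂ → C M₃ → C M₁

theorem SplitQH.isResolving_addFiltered {R : Type} [CommRing R] {A : Type} [Ring A] [Algebra R A]
    {Λ : Type} [Finite Λ] [PartialOrder Λ] {Δ : Λ → Type} [∀ l, AddCommGroup (Δ l)]
    [∀ l, Module R (Δ l)] [∀ l, Module A (Δ l)] [∀ l, IsScalarTower R A (Δ l)]
    (h : SplitQH R A Λ Δ) : IsResolving A fun M _ _ => AddFiltered A Δ Set.univ M where
  of_projective _ _ _ _ _ := h.addFiltered_of_projective
  of_extension _ _ _ _ _ _ _ _ _ _ _ hf hg hfg h₁ h₃ :=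
    .of_ker hg (h₁.of_equiv (equivKerOfExact hf hfg)) h₃
  of_isDirectSummand _ _ _ _ _ _ hM hX := h.addFiltered_of_isDirectSummand hM hX
  of_kernel _ _ _ _ _ _ _ _ _ _ _ hf hg hfg h₂ h₃ :=
    (h.addFiltered_ker h₂ h₃ hg).of_equiv (equivKerOfExact hf hfg).symm

theorem filtration_category_is_resolving_general {R : Type} [CommRing R] {A : Type} [Ring A]
    [Algebra R A] {Λ : Type} [Finite Λ] [PartialOrder Λ] {Δ : Λ → Type} [∀ l, AddCommGroup (Δ l)]
    [∀ l, Module R (Δ l)] [∀ l, Module A (Δ l)] [∀ l, IsScalarTower R A (Δ l)]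
    (h : SplitQH R A Λ Δ) : IsResolving A fun M _ _ => InFilt R A Λ Δ Set.univ M := by
  have := h.deltaFinA
  simpa only [inFilt_iff_addFiltered h.endIso] using h.isResolving_addFiltered

/-- `F(Δ̃)` is a resolving subcategory of the finitely generated `A`-modules
which are projective over `R`: it contains the finitely generated projective `A`-modules and
is closed under extensions, direct summands and kernels of epimorphisms. -/
theorem filtration_category_is_resolving
    (R : Type) [CommRing R] [IsNoetherianRing R]
    (A : Type) [Ring A] [Algebra R A]
    (Λ : Type) [Fintype Λ] [PartialOrder Λ]
    (Δ : Λ → Type) [∀ l, AddCommGroup (Δ l)] [∀ l, Module R (Δ l)]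
    [∀ l, Module A (Δ l)] [∀ l, IsScalarTower R A (Δ l)]
    (h : SplitQH R A Λ Δ) :
    -- contains all finitely generated projective `A`-modules
    (∀ (P : Type) [AddCommGroup P] [Module A P], Module.Finite A P →
      Module.Projective A P → InFilt R A Λ Δ Set.univ P) ∧
    -- closed under extensions
    (∀ (M₁ M₂ M₃ : Type) [AddCommGroup M₁] [Module A M₁] [AddCommGroup M₂] [Module A M₂]
      [AddCommGroup M₃] [Module A M₃] (f : M₁ →ₗ[A] M₂) (g : M₂ →ₗ[A] M₃),
      Function.Injective f → Function.Surjective g → Function.Exact f g →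
      InFilt R A Λ Δ Set.univ M₁ → InFilt R A Λ Δ Set.univ M₃ →
      InFilt R A Λ Δ Set.univ M₂) ∧
    -- closed under direct summands
    (∀ (M X : Type) [AddCommGroup M] [Module A M] [AddCommGroup X] [Module A X],
      InFilt R A Λ Δ Set.univ M → IsDirectSummand A X M → InFilt R A Λ Δ Set.univ X) ∧
    -- closed under kernels of epimorphisms
    (∀ (M₁ M₂ M₃ : Type) [AddCommGroup M₁] [Module A M₁] [AddCommGroup M₂] [Module A M₂]
      [AddCommGroup M₃] [Module A M₃] (f : M₁ →ₗ[A] M₂) (g : M₂ →ₗ[A] M₃),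
      Function.Injective f → Function.Surjective g → Function.Exact f g →
      InFilt R A Λ Δ Set.univ M₂ → InFilt R A Λ Δ Set.univ M₃ →
      InFilt R A Λ Δ Set.univ M₁) := by
  have H := filtration_category_is_resolving_general h
  exact ⟨H.of_projective, H.of_extension, H.of_isDirectSummand, H.of_kernel⟩

end
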